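/- Let u, v be real numbers with 0 < u < v < 1. Then lim_{n→∞} (1/n) · ∑_{p prime, u ≤ {n/p} < v} ln p = ψ(v) − ψ(u), where the sum is over primes p such that the fractional part {n/p} of n/p lies in [u, v), and ψ(x) = Γ′(x)/Γ(x) is the logarithmic derivative of the gamma function. -/

import Mathlib

open scoped Classical
open Filter Topology MeasureTheory Complex

noncomputable def nK (t : ℝ) : ℝ := 2 * ∫ y in (0:ℝ)..1, (1 - y) * Real.cos (y * t)

lemma nK_cont : Continuous nK := by
  unfold nK
  refine continuous_const.mul ?_
  apply intervalIntegral.continuous_parametric_intervalIntegral_of_continuous'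
  fun_prop

lemma nK_zero : nK 0 = 1 := by
  unfold nK
  simp only [mul_zero, Real.cos_zero, mul_one]
  rw [intervalIntegral.integral_sub (by simp) (by simp), integral_id]
  norm_num

lemma nK_eq {t : ℝ} (ht : t ≠ 0) : nK t = 2 * (1 - Real.cos t) / t ^ 2 := by
  have h : ∀ y ∈ Set.uIcc (0:ℝ) 1, HasDerivAt
      (fun y : ℝ => (1 - y) * Real.sin (y * t) / t - Real.cos (y * t) / t ^ 2)
      ((1 - y) * Real.cos (y * t)) y := by
    intro y _
    have h1 : HasDerivAt (fun y : ℝ => y * t) t y := by simpa using (hasDerivAt_id y).mul_const t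
    have h2 := (((hasDerivAt_id y).const_sub 1).mul h1.sin).div_const t
    have h3 := h1.cos.div_const (t ^ 2)
    convert! h2.sub h3 using 1
    simp only [id]
    field_simp
    ring
  unfold nK
  rw [intervalIntegral.integral_eq_sub_of_hasDerivAt h
    (Continuous.intervalIntegrable (by fun_prop) _ _)]
  simp
  field_simp
  ring

lemma nK_nonneg (t : ℝ) : 0 ≤ nK t := by
  rcases eq_or_ne t 0 with rfl | h
  · rw [nK_zero]; norm_num
  · rw [nK_eq h]
    have := Real.cos_le_one t
    exact div_nonneg (by linarith) (sq_nonneg t)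

lemma nK_le_one (t : ℝ) : nK t ≤ 1 := by
  rcases eq_or_ne t 0 with rfl | h
  · rw [nK_zero]
  · rw [nK_eq h, div_le_one (by positivity)]
    have := Real.one_sub_sq_div_two_le_cos (x := t)
    linarith

lemma nK_le (t : ℝ) : nK t ≤ 5 * (1 + t ^ 2)⁻¹ := by
  rw [← div_eq_mul_inv, le_div_iff₀ (by positivity)]
  have h1 := nK_le_one t
  have : nK t * t ^ 2 ≤ 4 := by
    rcases eq_or_ne t 0 with rfl | h
    · norm_num
    · rw [nK_eq h, div_mul_cancel₀ _ (by positivity)]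
      have := Real.neg_one_le_cos t
      linarith
  linarith

lemma nK_integrable : Integrable nK := by
  refine (integrable_inv_one_add_sq.const_mul 5).mono' nK_cont.aestronglyMeasurable ?_
  exact Eventually.of_forall fun t => by
    rw [Real.norm_of_nonneg (nK_nonneg t)]; exact nK_le t

lemma nK_integral_pos : 0 < ∫ t, nK t := by
  rw [integral_pos_iff_support_of_nonneg nK_nonneg nK_integrable]
  exact nK_cont.isOpen_support.measure_pos _ ⟨0, by simp [nK_zero]⟩

lemma nK_fourier (t : ℝ) :
    ∫ y in (-1:ℝ)..1, ((1 - |y| : ℝ) : ℂ) * cexp (-(I * y * t)) = nK t := by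
  have hc : Continuous fun y : ℝ => ((1 - |y| : ℝ) : ℂ) * cexp (-(I * y * t)) := by fun_prop
  rw [← intervalIntegral.integral_add_adjacent_intervals (b := 0)
    (hc.intervalIntegrable _ _) (hc.intervalIntegrable _ _)]
  have h1 := intervalIntegral.integral_comp_neg (a := 0) (b := 1)
    (fun y : ℝ => ((1 - |y| : ℝ) : ℂ) * cexp (-(I * y * t)))
  rw [neg_zero] at h1
  rw [← h1, ← intervalIntegral.integral_add
    (Continuous.intervalIntegrable (by fun_prop) _ _) (hc.intervalIntegrable _ _)]
  unfold nK
  rw [← intervalIntegral.integral_const_mul, ← intervalIntegral.integral_ofReal]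
  apply intervalIntegral.integral_congr
  intro y hy
  rw [Set.uIcc_of_le zero_le_one] at hy
  simp only [abs_neg, abs_of_nonneg hy.1]
  push_cast
  rw [Complex.cos]
  have e1 : -(I * -(y:ℂ) * t) = y * t * I := by ring
  have e2 : -(I * (y:ℂ) * t) = -(y * t) * I := by ring
  rw [e1, e2]
  ring

/-- Riemann-Lebesgue in the form needed. -/
lemma n_RL (f : ℝ → ℂ) :
    Tendsto (fun x : ℝ => ∫ y in (-1:ℝ)..1, cexp (I * y * x) * f y) atTop (𝓝 0) := by
  have h := Real.tendsto_integral_exp_smul_cocompact ((Set.Ioc (-1:ℝ) 1).indicator f)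
  have h2 : Tendsto (fun x : ℝ => -x / (2 * Real.pi)) atTop (cocompact ℝ) := by
    refine Tendsto.mono_right ?_ (atBot_le_cocompact)
    exact tendsto_neg_atTop_atBot.atBot_div_const (by positivity)
  refine (h.comp h2).congr fun x => ?_
  rw [intervalIntegral.integral_of_le (by norm_num), ← integral_indicator measurableSet_Ioc]
  simp only [Function.comp]
  congr 1
  ext y
  by_cases hy : y ∈ Set.Ioc (-1:ℝ) 1
  · simp only [Set.indicator_of_mem hy, Circle.smul_def, Real.fourierChar_apply, smul_eq_mul]
    congr 2
    push_cast
    have : (Real.pi : ℂ) ≠ 0 := by exact_mod_cast Real.pi_ne_zero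
    field_simp
  · simp [Set.indicator_of_notMem hy]

lemma n_fub {b : ℝ → ℝ} (hb : Measurable b) {C : ℝ} (hC : ∀ t, |b t| ≤ C) {ε : ℝ} (hε : 0 < ε)
    (x : ℝ) :
    ∫ t in Set.Ioi (0:ℝ), (b t : ℂ) * cexp (-(ε * t)) * nK (t - x) =
    ∫ y in (-1:ℝ)..1, cexp (I * y * x) *
      (((1 - |y| : ℝ) : ℂ) * ∫ t in Set.Ioi (0:ℝ), (b t : ℂ) * cexp (-((ε + I * y) * t))) := by
  have h1 : IntegrableOn (fun t : ℝ => (b t : ℂ) * cexp (-(ε * t))) (Set.Ioi 0) := by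
    have h := integrableOn_exp_mul_complex_Ioi (a := -(ε:ℂ)) (by simpa using hε) 0
    have := h.bdd_mul (c := C) (f := fun t => (b t : ℂ))
      (Complex.measurable_ofReal.comp hb).aestronglyMeasurable
      (Eventually.of_forall fun t => by simpa using hC t)
    simp only [neg_mul] at this
    exact this
  have h2 : IntegrableOn (fun y : ℝ => ((1 - |y| : ℝ) : ℂ)) (Set.Ioc (-1) 1) := by
    have hc : Continuous (fun y : ℝ => ((1 - |y| : ℝ) : ℂ)) := by fun_prop
    exact (hc.integrableOn_Icc (a := -1) (b := 1)).mono_set Set.Ioc_subset_Icc_self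
  have h3 : Integrable (Function.uncurry fun (t y : ℝ) =>
      cexp (-(I * y * (t - x))) * (((b t : ℂ) * cexp (-(ε * t))) * ((1 - |y| : ℝ) : ℂ)))
      ((volume.restrict (Set.Ioi (0:ℝ))).prod (volume.restrict (Set.Ioc (-1:ℝ) 1))) := by
    have hc : Continuous (fun z : ℝ × ℝ => cexp (-(I * z.2 * (z.1 - x)))) := by fun_prop
    refine (Integrable.mul_prod h1 h2).bdd_mul (c := 1) hc.aestronglyMeasurable ?_
    refine Eventually.of_forall fun z => ?_
    rw [Complex.norm_exp]
    simp
  have h4 := integral_integral_swap h3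
  rw [intervalIntegral.integral_of_le (by norm_num)]
  calc _ = _ := ?_
    _ = _ := h4
    _ = _ := ?_
  · congr 1
    ext t
    rw [← nK_fourier, intervalIntegral.integral_of_le (by norm_num), ← integral_const_mul]
    congr 1
    ext y
    push_cast
    ring
  · congr 1
    ext y
    rw [← integral_const_mul, ← integral_const_mul]
    congr 1
    ext t
    have : cexp (-(I * y * (t - x))) = cexp (I * y * x) * cexp (-(I * y * t)) := by
      rw [← Complex.exp_add]; ring_nf
    have h' : cexp (-((ε + I * y) * t)) = cexp (-(ε * t)) * cexp (-(I * y * t)) := by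
      rw [← Complex.exp_add]; ring_nf
    rw [this, h']
    ring

lemma n_taub {b : ℝ → ℝ} (hb : Measurable b) {C : ℝ} (hC : ∀ t, |b t| ≤ C) {G : ℂ → ℂ}
    (hG : ContinuousOn G {s | 0 ≤ s.re})
    (hbG : ∀ ε : ℝ, 0 < ε → ∀ y : ℝ,
      ∫ t in Set.Ioi (0:ℝ), (b t : ℂ) * cexp (-((ε + I * y) * t)) = G (ε + I * y)) :
    Tendsto (fun x : ℝ => ∫ t in Set.Ioi (0:ℝ), b t * nK (t - x)) atTop (𝓝 0) := by
  have key : ∀ x : ℝ, ((∫ t in Set.Ioi (0:ℝ), b t * nK (t - x) : ℝ) : ℂ) =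
      ∫ y in (-1:ℝ)..1, cexp (I * y * x) * (((1 - |y| : ℝ) : ℂ) * G (I * y)) := by
    intro x
    let e : ℕ → ℝ := fun n => 1 / ((n:ℝ) + 1)
    have he0 : ∀ n, 0 < e n := fun n => by positivity
    have he1 : ∀ n, e n ≤ 1 := fun n => by
      simp only [e]; rw [div_le_one (by positivity)]; linarith [n.cast_nonneg (α := ℝ)]
    have het : Tendsto e atTop (𝓝 0) := tendsto_one_div_add_atTop_nhds_zero_nat
    have hL : Tendsto (fun n => ∫ t in Set.Ioi (0:ℝ), (b t : ℂ) * cexp (-(e n * t)) * nK (t - x))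
        atTop (𝓝 (∫ t in Set.Ioi (0:ℝ), (b t : ℂ) * nK (t - x))) := by
      refine tendsto_integral_of_dominated_convergence (fun t => C * nK (t - x)) ?_ ?_ ?_ ?_
      · intro n
        have h1 : Measurable fun t : ℝ => (b t : ℂ) := Complex.measurable_ofReal.comp hb
        have h2 : Continuous fun t : ℝ => cexp (-(e n * t)) := by fun_prop
        have h3 : Continuous fun t : ℝ => (nK (t - x) : ℂ) :=
          Complex.continuous_ofReal.comp (nK_cont.comp (by fun_prop))
        exact ((h1.mul h2.measurable).mul h3.measurable).aestronglyMeasurable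
      · exact ((nK_integrable.comp_sub_right x).const_mul C).integrableOn
      · intro n
        refine (ae_restrict_iff' measurableSet_Ioi).2 (Eventually.of_forall fun t ht => ?_)
        have ht : 0 < t := ht
        rw [norm_mul, norm_mul, Complex.norm_exp, Complex.norm_real, Complex.norm_real,
          Real.norm_of_nonneg (nK_nonneg _)]
        refine mul_le_mul_of_nonneg_right ?_ (nK_nonneg _)
        have : Real.exp (-(e n * t : ℂ)).re ≤ 1 := by
          rw [Real.exp_le_one_iff]
          have := mul_pos (he0 n) ht
          simpa using this.le
        calc |b t| * Real.exp (-(e n * t : ℂ)).re ≤ |b t| * 1 := by gcongr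
          _ ≤ C := by simpa using hC t
      · refine Eventually.of_forall fun t => ?_
        have hc : Continuous fun r : ℝ => (b t : ℂ) * cexp (-(r * t)) * nK (t - x) := by fun_prop
        have := (hc.tendsto 0).comp het
        simpa [Function.comp_def] using this
    have hR : Tendsto (fun n => ∫ y in (-1:ℝ)..1, cexp (I * y * x) *
        (((1 - |y| : ℝ) : ℂ) * G (e n + I * y)))
        atTop (𝓝 (∫ y in (-1:ℝ)..1, cexp (I * y * x) * (((1 - |y| : ℝ) : ℂ) * G (I * y)))) := by
      have hcomp : IsCompact (Set.Icc (0:ℝ) 1 ×ˢ Set.Icc (-1:ℝ) 1) :=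
        isCompact_Icc.prod isCompact_Icc
      have hGc : ContinuousOn (fun z : ℝ × ℝ => G (z.1 + I * z.2))
          (Set.Ici (0:ℝ) ×ˢ Set.univ) := by
        refine hG.comp (by fun_prop) ?_
        intro z hz
        simpa using hz.1
      obtain ⟨M, hM⟩ := hcomp.exists_bound_of_continuousOn (hGc.mono (by
        intro z hz; exact ⟨hz.1.1, trivial⟩))
      simp only [intervalIntegral.integral_of_le (show (-1:ℝ) ≤ 1 by norm_num)]
      have hGy : ∀ r : ℝ, 0 ≤ r → Continuous fun y : ℝ => G (r + I * y) := by
        intro r hr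
        refine hG.comp_continuous (by fun_prop) ?_
        intro y; simpa using hr
      refine tendsto_integral_of_dominated_convergence (fun y => M) ?_ ?_ ?_ ?_
      · intro n
        have h1 : Continuous fun y : ℝ => cexp (I * y * x) := by fun_prop
        have h2 : Continuous fun y : ℝ => ((1 - |y| : ℝ) : ℂ) := by fun_prop
        have := h1.mul (h2.mul (hGy (e n) (he0 n).le))
        exact this.aestronglyMeasurable
      · exact integrable_const _
      · intro n
        refine (ae_restrict_iff' measurableSet_Ioc).2 (Eventually.of_forall fun y hy => ?_)
        have hb := hM (e n, y) ⟨⟨(he0 n).le, he1 n⟩, Set.Ioc_subset_Icc_self hy⟩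
        have hy1 : |y| ≤ 1 := abs_le.2 ⟨hy.1.le, hy.2⟩
        rw [norm_mul, norm_mul, Complex.norm_exp, Complex.norm_real,
          Real.norm_of_nonneg (by linarith)]
        have : (I * y * x : ℂ).re = 0 := by simp
        rw [this, Real.exp_zero, one_mul]
        have hn := norm_nonneg (G (e n + I * y))
        have := abs_nonneg y
        simp only at hb
        nlinarith
      · refine Eventually.of_forall fun y => ?_
        refine Tendsto.mul tendsto_const_nhds (Tendsto.mul tendsto_const_nhds ?_)
        have h0 : ContinuousWithinAt (fun r : ℝ => G (r + I * y)) (Set.Ici 0) 0 := by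
          have : ContinuousOn (fun r : ℝ => G (r + I * y)) (Set.Ici 0) := by
            refine hG.comp (by fun_prop) ?_
            intro r hr
            simpa using hr
          exact this 0 (by simp)
        have h1 : Tendsto e atTop (𝓝[Set.Ici 0] 0) :=
          tendsto_nhdsWithin_iff.2 ⟨het, Eventually.of_forall fun n => (he0 n).le⟩
        have := h0.tendsto.comp h1
        simpa [Function.comp_def] using this
    have hLR : ∀ n, ∫ t in Set.Ioi (0:ℝ), (b t : ℂ) * cexp (-(e n * t)) * nK (t - x) =
        ∫ y in (-1:ℝ)..1, cexp (I * y * x) * (((1 - |y| : ℝ) : ℂ) * G (e n + I * y)) := by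
      intro n
      rw [n_fub hb hC (he0 n) x]
      simp only [hbG _ (he0 n)]
    simp only [hLR] at hL
    have := tendsto_nhds_unique hL hR
    rw [← this]
    simp only [← Complex.ofReal_mul]
    exact integral_ofReal.symm
  have hRL := n_RL (fun y : ℝ => ((1 - |y| : ℝ) : ℂ) * G (I * y))
  simp only [← key] at hRL
  have := (Complex.continuous_re.tendsto _).comp hRL
  simpa [Function.comp_def] using this

lemma n_conv {B : ℝ → ℝ} (hB : Measurable B) {C : ℝ} (h0 : ∀ t, 0 ≤ B t) (hC : ∀ t, B t ≤ C)
    (hneg : ∀ t ≤ 0, B t = 0) {G : ℂ → ℂ}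
    (hG : ContinuousOn G {s | 0 ≤ s.re})
    (hbG : ∀ ε : ℝ, 0 < ε → ∀ y : ℝ,
      ∫ t in Set.Ioi (0:ℝ), ((B t - 1 : ℝ) : ℂ) * cexp (-((ε + I * y) * t)) = G (ε + I * y)) :
    Tendsto (fun x : ℝ => ∫ t, B (t + x) * nK t) atTop (𝓝 (∫ t, nK t)) := by
  have h1 := n_taub (b := fun t => B t - 1) (hB.sub_const 1) (C := C + 1)
    (fun t => abs_le.2 ⟨by linarith [h0 t, hC t], by linarith [hC t]⟩) hG hbG
  have h2 : Tendsto (fun x : ℝ => ∫ t, (Set.Ioi (0:ℝ)).indicator (fun _ => (1:ℝ)) (t + x) * nK t)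
      atTop (𝓝 (∫ t, nK t)) := by
    refine tendsto_integral_filter_of_dominated_convergence nK ?_ ?_ nK_integrable ?_
    · refine Eventually.of_forall fun x => ?_
      have : Measurable ((Set.Ioi (0:ℝ)).indicator (fun _ => (1:ℝ))) :=
        measurable_const.indicator measurableSet_Ioi
      exact ((this.comp (measurable_id.add_const x)).mul nK_cont.measurable).aestronglyMeasurable
    · refine Eventually.of_forall fun x => Eventually.of_forall fun t => ?_
      rw [norm_mul, Real.norm_of_nonneg (nK_nonneg t)]
      have : ‖(Set.Ioi (0:ℝ)).indicator (fun _ => (1:ℝ)) (t + x)‖ ≤ 1 := by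
        rw [Set.indicator_apply]; split_ifs <;> simp
      nlinarith [nK_nonneg t]
    · refine Eventually.of_forall fun t => ?_
      refine tendsto_const_nhds.congr' ?_
      filter_upwards [eventually_gt_atTop (-t)] with x hx
      rw [Set.indicator_of_mem (by simp; linarith), one_mul]
  have h3 := h1.add h2
  rw [zero_add] at h3
  refine h3.congr fun x => ?_
  have e1 : ∫ t, (Set.Ioi (0:ℝ)).indicator (fun _ => (1:ℝ)) (t + x) * nK t =
      ∫ t in Set.Ioi (0:ℝ), nK (t - x) := by
    rw [← integral_sub_right_eq_self _ x, ← integral_indicator measurableSet_Ioi]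
    congr 1; ext t
    simp [Set.indicator_apply]
  have e2 : ∫ t, B (t + x) * nK t = ∫ t in Set.Ioi (0:ℝ), B t * nK (t - x) := by
    rw [← integral_sub_right_eq_self _ x, ← integral_indicator measurableSet_Ioi]
    congr 1; ext t
    simp only [Set.indicator_apply, Set.mem_Ioi, sub_add_cancel]
    split_ifs with h
    · rfl
    · rw [hneg t (not_lt.1 h), zero_mul]
  have hi : IntegrableOn (fun t => nK (t - x)) (Set.Ioi (0:ℝ)) :=
    (nK_integrable.comp_sub_right x).integrableOn
  have hi2 : IntegrableOn (fun t => (B t - 1) * nK (t - x)) (Set.Ioi (0:ℝ)) := by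
    refine Integrable.bdd_mul (c := C + 1) hi (hB.sub_const 1).aestronglyMeasurable ?_
    exact Eventually.of_forall fun t => 
      abs_le.2 ⟨by linarith [h0 t, hC t], by linarith [hC t]⟩
  rw [e1, e2, ← integral_add hi2 hi]
  congr 1; ext t; ring

theorem n_WI {B : ℝ → ℝ} (hB : Measurable B) {C : ℝ} (h0 : ∀ t, 0 ≤ B t) (hC : ∀ t, B t ≤ C)
    (hneg : ∀ t ≤ 0, B t = 0) (hmono : ∀ s t, s ≤ t → B s ≤ B t * Real.exp (t - s)) {G : ℂ → ℂ}
    (hG : ContinuousOn G {s | 0 ≤ s.re})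
    (hbG : ∀ ε : ℝ, 0 < ε → ∀ y : ℝ,
      ∫ t in Set.Ioi (0:ℝ), ((B t - 1 : ℝ) : ℂ) * cexp (-((ε + I * y) * t)) = G (ε + I * y)) :
    Tendsto B atTop (𝓝 1) := by
  set c := ∫ t, nK t with hc
  have hcpos : 0 < c := nK_integral_pos
  have hconv : ∀ l : ℝ, 0 < l →
      Tendsto (fun x : ℝ => ∫ t, B (l⁻¹ * (t + x)) * nK t) atTop (𝓝 c) := by
    intro l hl
    refine n_conv (B := fun t => B (l⁻¹ * t)) (C := C) (G := fun s => l * G (l * s))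
      (hB.comp (measurable_id.const_mul _)) (fun t => h0 _) (fun t => hC _) ?_ ?_ ?_
    · intro t ht
      exact hneg _ (mul_nonpos_of_nonneg_of_nonpos (by positivity) ht)
    · refine continuousOn_const.mul (hG.comp (by fun_prop) ?_)
      intro s hs
      have hs : 0 ≤ s.re := hs
      simpa using mul_nonneg hl.le hs
    · intro ε hε y
      have := integral_comp_mul_left_Ioi
        (fun t : ℝ => ((B t - 1 : ℝ) : ℂ) * cexp (-((((l * ε : ℝ) : ℂ) + I * ((l * y : ℝ) : ℂ)) * t)))
        0 (inv_pos.2 hl)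
      rw [mul_zero, hbG _ (by positivity)] at this
      have e : (((l * ε : ℝ) : ℂ) + I * ((l * y : ℝ) : ℂ)) = l * (ε + I * y) := by
        push_cast; ring
      rw [e] at this
      simp only [inv_inv, Complex.real_smul] at this
      rw [← this]
      congr 1; ext t
      congr 3
      push_cast
      have : (l:ℂ) ≠ 0 := by exact_mod_cast hl.ne'
      field_simp
  set cR : ℝ → ℝ := fun R => ∫ t in (-R)..R, nK t with hcR
  have hcRt : Tendsto cR atTop (𝓝 c) :=
    intervalIntegral_tendsto_integral nK_integrable tendsto_neg_atTop_atBot tendsto_id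
  have hBK : ∀ l x : ℝ, Integrable (fun t => B (l⁻¹ * (t + x)) * nK t) := by
    intro l x
    refine nK_integrable.bdd_mul (c := C) 
      (hB.comp ((measurable_id.add_const x).const_mul _)).aestronglyMeasurable ?_
    exact Eventually.of_forall fun t => abs_le.2 ⟨by linarith [h0 (l⁻¹ * (t + x)), hC (l⁻¹ * (t + x))], hC _⟩
  -- upper
  have hup : ∀ R : ℝ, 0 < R → ∀ x : ℝ,
      B ((R ^ 2)⁻¹ * (x - R)) * Real.exp (-(2 / R)) * cR R
        ≤ ∫ t, B ((R ^ 2)⁻¹ * (t + x)) * nK t := by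
    intro R hR x
    have : ∫ t in Set.Ioc (-R) R, B ((R ^ 2)⁻¹ * (x - R)) * Real.exp (-(2 / R)) * nK t
        ≤ ∫ t in Set.Ioc (-R) R, B ((R ^ 2)⁻¹ * (t + x)) * nK t := by
      refine setIntegral_mono_on ((nK_integrable.const_mul _).integrableOn)
        (hBK _ _).integrableOn measurableSet_Ioc ?_
      intro t ht
      refine mul_le_mul_of_nonneg_right ?_ (nK_nonneg t)
      have h := hmono ((R ^ 2)⁻¹ * (x - R)) ((R ^ 2)⁻¹ * (t + x))
        (by gcongr; linarith [ht.1])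
      have h' : Real.exp ((R ^ 2)⁻¹ * (t + x) - (R ^ 2)⁻¹ * (x - R)) ≤ Real.exp (2 / R) := by
        apply Real.exp_le_exp.2
        calc _ = (R ^ 2)⁻¹ * (t + R) := by ring
          _ ≤ (R ^ 2)⁻¹ * (2 * R) := by gcongr; linarith [ht.2]
          _ = 2 / R := by field_simp
      have h'' := h.trans (mul_le_mul_of_nonneg_left h' (h0 _))
      rw [Real.exp_neg, ← div_eq_mul_inv, div_le_iff₀ (Real.exp_pos _)]
      exact h''
    rw [integral_const_mul, ← intervalIntegral.integral_of_le (by linarith)] at this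
    refine this.trans (setIntegral_le_integral (hBK _ _) ?_)
    exact Eventually.of_forall fun t => mul_nonneg (h0 _) (nK_nonneg t)
  have hlow : ∀ R : ℝ, 0 < R → ∀ x : ℝ,
      ∫ t, B ((R ^ 2)⁻¹ * (t + x)) * nK t ≤
      B ((R ^ 2)⁻¹ * (x + R)) * Real.exp (2 / R) * c + C * (c - cR R) := by
    intro R hR x
    have hpt : ∀ t, B ((R ^ 2)⁻¹ * (t + x)) * nK t ≤
        B ((R ^ 2)⁻¹ * (x + R)) * Real.exp (2 / R) * nK t +
        (C * nK t - C * (Set.Ioc (-R) R).indicator nK t) := by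
      intro t
      have hK := nK_nonneg t
      by_cases ht : t ∈ Set.Ioc (-R) R
      · rw [Set.indicator_of_mem ht, sub_self, add_zero]
        refine mul_le_mul_of_nonneg_right ?_ hK
        refine (hmono ((R ^ 2)⁻¹ * (t + x)) ((R ^ 2)⁻¹ * (x + R))
          (mul_le_mul_of_nonneg_left (by linarith [ht.2]) (by positivity))).trans ?_
        refine mul_le_mul_of_nonneg_left (Real.exp_le_exp.2 ?_) (h0 _)
        calc _ = (R ^ 2)⁻¹ * (R - t) := by ring
          _ ≤ (R ^ 2)⁻¹ * (2 * R) := by gcongr; linarith [ht.1]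
          _ = 2 / R := by field_simp
      · rw [Set.indicator_of_notMem ht, mul_zero, sub_zero]
        have h1 := mul_le_mul_of_nonneg_right (hC ((R ^ 2)⁻¹ * (t + x))) hK
        have h2 : 0 ≤ B ((R ^ 2)⁻¹ * (x + R)) * Real.exp (2 / R) * nK t :=
          mul_nonneg (mul_nonneg (h0 _) (Real.exp_pos _).le) hK
        linarith
    have hi1 := nK_integrable.const_mul (B ((R ^ 2)⁻¹ * (x + R)) * Real.exp (2 / R))
    have hi2 := nK_integrable.const_mul C
    have hi3 := (nK_integrable.indicator (measurableSet_Ioc (a := -R) (b := R))).const_mul C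
    have := integral_mono (hBK _ _) (hi1.add (hi2.sub hi3)) hpt
    refine this.trans (le_of_eq ?_)
    rw [integral_add' hi1 (hi2.sub hi3), integral_sub' hi2 hi3, integral_const_mul,
      integral_const_mul, integral_const_mul, integral_indicator measurableSet_Ioc,
      ← intervalIntegral.integral_of_le (by linarith)]
    ring
  have hexp : Tendsto (fun R : ℝ => Real.exp (2 / R)) atTop (𝓝 1) := by
    have := (Real.continuous_exp.tendsto 0).comp (tendsto_const_nhds.div_atTop tendsto_id :
      Tendsto (fun R : ℝ => 2 / R) atTop (𝓝 0))
    simpa [Function.comp_def] using this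
  have hinv : Tendsto (fun R : ℝ => 1 / R) atTop (𝓝 0) := tendsto_const_nhds.div_atTop tendsto_id
  refine tendsto_order.2 ⟨?_, ?_⟩
  · intro a ha
    have hlim : Tendsto (fun R : ℝ => (c - 1 / R - C * (c - cR R)) / (Real.exp (2 / R) * c)) atTop
        (𝓝 1) := by
      have := ((tendsto_const_nhds (x := c)).sub hinv).sub
        ((tendsto_const_nhds (x := C)).mul ((tendsto_const_nhds (x := c)).sub hcRt))
      have := this.div (hexp.mul_const c) (by simpa using hcpos.ne')
      simpa [hcpos.ne', Pi.div_def] using this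
    obtain ⟨R, hR, hR0⟩ := (((tendsto_order.1 hlim).1 a ha).and (eventually_gt_atTop 0)).exists
    have hev := (tendsto_order.1 (hconv (R ^ 2) (by positivity))).1 (c - 1 / R)
      (by have : 0 < 1 / R := by positivity
          linarith)
    have hsh : Tendsto (fun z : ℝ => R ^ 2 * z - R) atTop atTop :=
      tendsto_atTop_add_const_right _ _ (tendsto_id.const_mul_atTop (by positivity))
    filter_upwards [hsh.eventually hev] with z hz
    have h := hlow R hR0 (R ^ 2 * z - R)
    have e : (R ^ 2)⁻¹ * (R ^ 2 * z - R + R) = z := by field_simp; ring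
    rw [e] at h
    refine hR.trans ?_
    rw [div_lt_iff₀ (by positivity)]
    nlinarith
  · intro a ha
    have hlim : Tendsto (fun R : ℝ => (c + 1 / R) * Real.exp (2 / R) / cR R) atTop (𝓝 1) := by
      have := (((tendsto_const_nhds (x := c)).add hinv).mul hexp).div hcRt hcpos.ne'
      simpa [hcpos.ne', Pi.div_def] using this
    obtain ⟨R, ⟨hR, hR0⟩, hRc⟩ := ((((tendsto_order.1 hlim).2 a ha).and
      (eventually_gt_atTop 0)).and ((tendsto_order.1 hcRt).1 0 hcpos)).exists
    have hev := (tendsto_order.1 (hconv (R ^ 2) (by positivity))).2 (c + 1 / R)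
      (by have : 0 < 1 / R := by positivity
          linarith)
    have hsh : Tendsto (fun z : ℝ => R ^ 2 * z + R) atTop atTop :=
      tendsto_atTop_add_const_right _ _ (tendsto_id.const_mul_atTop (by positivity))
    filter_upwards [hsh.eventually hev] with z hz
    have h := hup R hR0 (R ^ 2 * z + R)
    have e : (R ^ 2)⁻¹ * (R ^ 2 * z + R - R) = z := by field_simp; ring
    rw [e, Real.exp_neg] at h
    refine lt_of_le_of_lt ?_ hR
    rw [le_div_iff₀ hRc]
    have h' := h.trans hz.le
    have hE := Real.exp_pos (2 / R)
    calc B z * cR R = (B z * (Real.exp (2 / R))⁻¹ * cR R) * Real.exp (2 / R) := by field_simp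
      _ ≤ _ := by gcongr

lemma n_Laux : ∃ F : ℂ → ℂ, ContinuousOn F {s | 1 ≤ s.re} ∧ ∀ s : ℂ, 1 < s.re →
    F s = LSeries (fun n => (ArithmeticFunction.vonMangoldt n : ℂ)) s - 1 / (s - 1) := by
  refine ⟨_, ArithmeticFunction.vonMangoldt.continuousOn_LFunctionResidueClassAux (q := 1) 1, ?_⟩
  intro s hs
  rw [ArithmeticFunction.vonMangoldt.eqOn_LFunctionResidueClassAux (q := 1) isUnit_one hs]
  have : ∀ n : ℕ, ArithmeticFunction.vonMangoldt.residueClass (1 : ZMod 1) n =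
      ArithmeticFunction.vonMangoldt n := fun n =>
    Set.indicator_of_mem (show n ∈ {n : ℕ | (n : ZMod 1) = 1} from Subsingleton.elim _ _) _
  simp [this]

lemma n_LS {s : ℂ} (hs : 1 < s.re) :
    LSeries (fun n => (ArithmeticFunction.vonMangoldt n : ℂ)) s =
      s * ∫ t in Set.Ioi (0:ℝ), ((Chebyshev.psi (Real.exp t) * Real.exp (-t) : ℝ) : ℂ) *
        cexp (-((s - 1) * t)) := by
  have hpsi : ∀ n : ℕ, ∑ k ∈ Finset.Icc 1 n, ArithmeticFunction.vonMangoldt k =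
      Chebyshev.psi n := by
    intro n
    rw [Chebyshev.psi, Nat.floor_natCast]
    rfl
  rw [LSeries_eq_mul_integral_of_nonneg (fun n => ArithmeticFunction.vonMangoldt n)
    (r := 1) zero_le_one hs ?_ (fun n => ArithmeticFunction.vonMangoldt_nonneg)]
  · congr 1
    have him : Real.exp '' Set.Ioi 0 = Set.Ioi 1 := by
      ext x
      constructor
      · rintro ⟨t, ht, rfl⟩
        exact Real.one_lt_exp_iff.2 ht
      · intro hx
        have hx : 1 < x := hx
        exact ⟨Real.log x, Real.log_pos hx, Real.exp_log (by linarith)⟩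
    rw [← him, integral_image_eq_integral_abs_deriv_smul measurableSet_Ioi
      (fun x _ => (Real.hasDerivAt_exp x).hasDerivWithinAt) Real.exp_injective.injOn]
    congr 1
    ext t
    rw [abs_of_pos (Real.exp_pos t), Complex.real_smul, ← Complex.ofReal_sum, hpsi,
      ← Chebyshev.psi_eq_psi_coe_floor, Complex.cpow_def_of_ne_zero (by
        exact_mod_cast (Real.exp_pos t).ne'), ← Complex.ofReal_log (Real.exp_pos t).le,
        Real.log_exp]
    push_cast
    have : cexp t * cexp (t * -(s + 1)) = cexp (-t) * cexp (-((s - 1) * t)) := by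
      rw [← Complex.exp_add, ← Complex.exp_add]; ring_nf
    linear_combination (Chebyshev.psi (Real.exp t) : ℂ) * this
  · simp only [hpsi, Real.rpow_one]
    refine Asymptotics.IsBigO.of_bound (Real.log 4 + 4) (Eventually.of_forall fun n => ?_)
    rw [Real.norm_of_nonneg (Chebyshev.psi_nonneg _), Real.norm_of_nonneg (by positivity)]
    exact Chebyshev.psi_le_const_mul_self (by positivity)

theorem n_PNT_psi : Tendsto (fun t : ℝ => Chebyshev.psi (Real.exp t) * Real.exp (-t))
    atTop (𝓝 1) := by
  obtain ⟨F, hFc, hF⟩ := n_Laux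
  have hm : Measurable (fun t : ℝ => Chebyshev.psi (Real.exp t) * Real.exp (-t)) :=
    (Chebyshev.psi_mono.measurable.comp Real.measurable_exp).mul
      (Real.measurable_exp.comp measurable_neg)
  have h0 : ∀ t, 0 ≤ Chebyshev.psi (Real.exp t) * Real.exp (-t) := fun t =>
    mul_nonneg (Chebyshev.psi_nonneg _) (Real.exp_pos _).le
  have hC : ∀ t, Chebyshev.psi (Real.exp t) * Real.exp (-t) ≤ Real.log 4 + 4 := by
    intro t
    rw [Real.exp_neg, ← div_eq_mul_inv, div_le_iff₀ (Real.exp_pos t)]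
    exact Chebyshev.psi_le_const_mul_self (Real.exp_pos t).le
  refine n_WI (G := fun s => (F (1 + s) - 1) / (1 + s)) hm (C := Real.log 4 + 4) h0 hC ?_ ?_ ?_ ?_
  · intro t ht
    rw [Chebyshev.psi_eq_zero_of_le_one (Real.exp_le_one_iff.2 ht), zero_mul]
  · intro s t hst
    have : Real.exp (-t) * Real.exp (t - s) = Real.exp (-s) := by
      rw [← Real.exp_add]; ring_nf
    rw [mul_assoc, this]
    exact mul_le_mul_of_nonneg_right (Chebyshev.psi_mono (Real.exp_le_exp.2 hst))
      (Real.exp_pos _).le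
  · refine ContinuousOn.div ((hFc.comp (by fun_prop) ?_).sub continuousOn_const) (by fun_prop) ?_
    · intro s hs
      have hs : 0 ≤ s.re := hs
      simpa using hs
    · intro s hs h
      have hs : 0 ≤ s.re := hs
      have := congrArg Complex.re h
      simp at this
      linarith
  · intro ε hε y
    set z : ℂ := ε + I * y with hz
    have hzre : z.re = ε := by simp [hz]
    have hz0 : z ≠ 0 := by
      intro h; rw [h] at hzre; simp at hzre; linarith
    have hz1 : 1 + z ≠ 0 := by
      intro h
      have := congrArg Complex.re h
      simp [hzre] at this
      linarith
    have hre : 1 < (1 + z).re := by simp [hzre, hε]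
    have h1 := hF (1 + z) hre
    rw [n_LS hre] at h1
    simp only [add_sub_cancel_left] at h1
    have hi2 : IntegrableOn (fun t : ℝ => cexp (-(z * t))) (Set.Ioi 0) := by
      have := integrableOn_exp_mul_complex_Ioi (a := -z) (by simpa [hzre] using hε) 0
      simpa only [neg_mul] using this
    have hi1 : IntegrableOn (fun t : ℝ => ((Chebyshev.psi (Real.exp t) * Real.exp (-t) : ℝ) : ℂ) *
        cexp (-(z * t))) (Set.Ioi 0) := by
      refine Integrable.bdd_mul (c := Real.log 4 + 4) hi2
        (Complex.measurable_ofReal.comp hm).aestronglyMeasurable ?_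
      refine Eventually.of_forall fun t => ?_
      rw [Complex.norm_real, Real.norm_of_nonneg (h0 t)]
      exact hC t
    have hI : ∫ t in Set.Ioi (0:ℝ), cexp (-(z * t)) = 1 / z := by
      have := integral_exp_mul_complex_Ioi (a := -z) (by simpa [hzre] using hε) 0
      simp only [neg_mul] at this
      rw [this]
      simp
    have hsplit : ∫ t in Set.Ioi (0:ℝ),
        ((Chebyshev.psi (Real.exp t) * Real.exp (-t) - 1 : ℝ) : ℂ) * cexp (-(z * t)) =
        (∫ t in Set.Ioi (0:ℝ), ((Chebyshev.psi (Real.exp t) * Real.exp (-t) : ℝ) : ℂ) *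
        cexp (-(z * t))) - 1 / z := by
      rw [← hI, ← integral_sub hi1 hi2]
      congr 1; ext t; push_cast; ring
    rw [hsplit, h1]
    field_simp
    ring

theorem n_PNT : Tendsto (fun x : ℝ => Chebyshev.theta x / x) atTop (𝓝 1) := by
  have h1 : Tendsto (fun x : ℝ => Chebyshev.psi x / x) atTop (𝓝 1) := by
    refine (n_PNT_psi.comp Real.tendsto_log_atTop).congr' ?_
    filter_upwards [eventually_gt_atTop 0] with x hx
    simp only [Function.comp]
    rw [Real.exp_neg, Real.exp_log hx, div_eq_mul_inv]
  obtain ⟨C, hC⟩ := Chebyshev.psi_sub_theta_le_mul_sqrt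
  have h2 : Tendsto (fun x : ℝ => C / √x) atTop (𝓝 0) :=
    tendsto_const_nhds.div_atTop Real.tendsto_sqrt_atTop
  have h3 : Tendsto (fun x : ℝ => Chebyshev.psi x / x - C / √x) atTop (𝓝 1) := by
    simpa using h1.sub h2
  refine tendsto_of_tendsto_of_tendsto_of_le_of_le' h3 h1 ?_ ?_
  · filter_upwards [eventually_gt_atTop 0] with x hx
    have hs := Real.sqrt_pos.2 hx
    have e : C / √x = C * √x / x := by
      rw [div_eq_div_iff hs.ne' hx.ne', mul_assoc, Real.mul_self_sqrt hx.le]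
    rw [e, ← sub_div]
    gcongr
    linarith [hC x]
  · filter_upwards [eventually_gt_atTop 0] with x hx
    gcongr
    exact Chebyshev.theta_le_psi x

noncomputable def nDi (x : ℝ) : ℝ := deriv Real.Gamma x / Real.Gamma x

lemma n_diffG {x : ℝ} (hx : 0 < x) : DifferentiableAt ℝ Real.Gamma x :=
  Real.differentiableAt_Gamma fun m => by have := m.cast_nonneg (α := ℝ); linarith

lemma nDi_add_one {x : ℝ} (hx : 0 < x) : nDi (x + 1) = nDi x + 1 / x := by
  have h1 : HasDerivAt (fun y => Real.Gamma (y + 1)) (deriv Real.Gamma (x + 1)) x :=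
    (n_diffG (by linarith : 0 < x + 1)).hasDerivAt.comp_add_const x 1
  have h2 : HasDerivAt (fun y => y * Real.Gamma y) (1 * Real.Gamma x + x * deriv Real.Gamma x) x :=
    (hasDerivAt_id x).mul (n_diffG hx).hasDerivAt
  have h3 : (fun y => Real.Gamma (y + 1)) =ᶠ[𝓝 x] fun y => y * Real.Gamma y := by
    filter_upwards [lt_mem_nhds hx] with y hy
    exact Real.Gamma_add_one hy.ne'
  have h4 := (h2.congr_of_eventuallyEq h3).unique h1
  have hG := (Real.Gamma_pos_of_pos hx).ne'
  unfold nDi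
  rw [← h4, Real.Gamma_add_one hx.ne']
  field_simp
  ring

lemma nDi_mono : MonotoneOn nDi (Set.Ioi 0) := by
  have hd : ∀ x ∈ Set.Ioi (0:ℝ), HasDerivAt (Real.log ∘ Real.Gamma) (nDi x) x := fun x hx =>
    (n_diffG hx).hasDerivAt.log (Real.Gamma_pos_of_pos hx).ne'
  have := Real.convexOn_log_Gamma.monotoneOn_deriv (fun x hx => (hd x hx).differentiableAt)
  intro x hx y hy hxy
  have h := this hx hy hxy
  rwa [(hd x hx).deriv, (hd y hy).deriv] at h

lemma nDi_add_nat {x : ℝ} (hx : 0 < x) (M : ℕ) :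
    nDi (x + M) = nDi x + ∑ m ∈ Finset.range M, 1 / ((m:ℝ) + x) := by
  induction M with
  | zero => simp
  | succ M ih =>
    rw [Finset.sum_range_succ, ← add_assoc, ← ih, Nat.cast_succ, ← add_assoc,
      nDi_add_one (by positivity), add_comm x]

lemma nDi_series {u v : ℝ} (hu : 0 < u) (huv : u < v) (hv : v < 1) (M : ℕ) :
    0 ≤ nDi v - nDi u - ∑ m ∈ Finset.range M, (1 / ((m:ℝ) + u) - 1 / (m + v)) ∧
    nDi v - nDi u - ∑ m ∈ Finset.range M, (1 / ((m:ℝ) + u) - 1 / (m + v)) ≤ 1 / (M + u) := by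
  have hM := M.cast_nonneg (α := ℝ)
  have h1 := nDi_add_nat hu M
  have h2 := nDi_add_nat (hu.trans huv) M
  have h3 : nDi (u + M) ≤ nDi (v + M) := nDi_mono (by simp; linarith) (by simp; linarith)
    (by linarith)
  have h4 : nDi (v + M) ≤ nDi (u + M + 1) := nDi_mono (by simp; linarith) (by simp; linarith)
    (by linarith)
  rw [nDi_add_one (by positivity), add_comm u (M:ℝ)] at h4
  rw [add_comm u (M:ℝ)] at h1 h3
  rw [Finset.sum_sub_distrib]
  constructor <;> linarith

/-- the sum -/
noncomputable def nS (u v : ℝ) (n : ℕ) : ℝ := ∑' p : ℕ,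
          if p.Prime ∧ u ≤ Int.fract ((n : ℝ) / (p : ℝ)) ∧ Int.fract ((n : ℝ) / (p : ℝ)) < v
          then Real.log p else 0

lemma n_theta_sub {a b : ℝ} (hab : a ≤ b) (N : ℕ) (hN : b < N) (ha : 0 ≤ a) :
    Chebyshev.theta b - Chebyshev.theta a =
      ∑ p ∈ Finset.range N, if p.Prime ∧ a < p ∧ (p:ℝ) ≤ b then Real.log p else 0 := by
  have key : ∀ c : ℝ, 0 ≤ c → c < N → Chebyshev.theta c =
      ∑ p ∈ Finset.range N, if p.Prime ∧ (p:ℝ) ≤ c then Real.log p else 0 := by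
    intro c hc hcN
    rw [Chebyshev.theta, ← Finset.sum_filter]
    refine Finset.sum_congr ?_ fun _ _ => rfl
    ext p
    simp only [Finset.mem_filter, Finset.mem_Ioc, Finset.mem_range, Nat.le_floor_iff hc]
    constructor
    · rintro ⟨⟨_, h2⟩, h3⟩
      exact ⟨by exact_mod_cast h2.trans_lt hcN, h3, h2⟩
    · rintro ⟨_, h2, h3⟩
      exact ⟨⟨h2.pos, h3⟩, h2⟩
  rw [key b (ha.trans hab) hN, key a ha (hab.trans_lt hN), ← Finset.sum_sub_distrib]
  refine Finset.sum_congr rfl fun p _ => ?_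
  by_cases hp : p.Prime
  · by_cases h1 : (p:ℝ) ≤ a
    · simp [hp, h1, h1.trans hab, not_lt.2 h1]
    · simp [hp, h1, not_le.1 h1]
  · simp [hp]

lemma n_floor_iff {u v : ℝ} (hu : 0 < u) (hv : v < 1) {y : ℝ} (hy : 0 ≤ y) (m : ℕ) :
    (m + u ≤ y ∧ y < m + v) ↔ (⌊y⌋₊ = m ∧ u ≤ Int.fract y ∧ Int.fract y < v) := by
  have hf : Int.fract y = y - ⌊y⌋₊ := by
    rw [Int.fract, natCast_floor_eq_intCast_floor hy]
  rw [hf]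
  constructor
  · rintro ⟨h1, h2⟩
    have : ⌊y⌋₊ = m := (Nat.floor_eq_iff hy).2 ⟨by linarith, by linarith⟩
    rw [this]
    exact ⟨rfl, by linarith, by linarith⟩
  · rintro ⟨rfl, h1, h2⟩
    exact ⟨by linarith, by linarith⟩

lemma n_fract {u v : ℝ} (hu : 0 < u) (huv : u < v) (hv : v < 1) {n p : ℕ} (hp : p.Prime)
    (m : ℕ) :
    ((n:ℝ) / (m + v) < p ∧ (p:ℝ) ≤ n / (m + u)) ↔
    (⌊(n:ℝ) / p⌋₊ = m ∧ u ≤ Int.fract ((n:ℝ) / p) ∧ Int.fract ((n:ℝ) / p) < v) := by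
  rw [← n_floor_iff hu hv (by positivity)]
  have hp0 : (0:ℝ) < p := by exact_mod_cast hp.pos
  have hv0 := hu.trans huv
  rw [div_lt_iff₀ (by positivity), le_div_iff₀ (by positivity), le_div_iff₀ hp0,
    div_lt_iff₀ hp0, mul_comm (p:ℝ), mul_comm (p:ℝ), and_comm]

lemma n_decomp {u v : ℝ} (hu : 0 < u) (huv : u < v) (hv : v < 1) (n : ℕ) (M : ℕ) (hM : 1 ≤ M) :
    0 ≤ nS u v n - ∑ m ∈ Finset.range M,
      (Chebyshev.theta (n / (m + u)) - Chebyshev.theta (n / (m + v))) ∧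
    nS u v n - ∑ m ∈ Finset.range M,
      (Chebyshev.theta (n / (m + u)) - Chebyshev.theta (n / (m + v))) ≤
      Chebyshev.theta (n / M) := by
  have hv0 := hu.trans huv
  set N := ⌊(n:ℝ) / u⌋₊ + 1 with hN
  have hNu : (n:ℝ) / u < N := by rw [hN]; exact_mod_cast Nat.lt_floor_add_one _
  have hle : ∀ a : ℝ, u ≤ a → (n:ℝ) / a < N := fun a ha =>
    lt_of_le_of_lt (by gcongr) hNu
  have hS : nS u v n = ∑ p ∈ Finset.range N,
      if p.Prime ∧ u ≤ Int.fract ((n : ℝ) / (p : ℝ)) ∧ Int.fract ((n : ℝ) / (p : ℝ)) < v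
          then Real.log p else 0 := by
    unfold nS
    refine tsum_eq_sum fun p hp => ?_
    rw [Finset.mem_range, not_lt] at hp
    have hp' : (N:ℝ) ≤ p := by exact_mod_cast hp
    rw [if_neg]
    rintro ⟨h1, h2, -⟩
    have hp0 : (0:ℝ) < p := by exact_mod_cast h1.pos
    have h3 : (n:ℝ) / p < u := by
      rw [div_lt_iff₀ hp0, mul_comm, ← div_lt_iff₀ hu]
      exact hNu.trans_le hp'
    have h4 : Int.fract ((n:ℝ) / p) ≤ (n:ℝ) / p := by
      rw [Int.fract_eq_self.2 ⟨by positivity, by linarith⟩]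
    linarith
  have hT : ∑ m ∈ Finset.range M,
      (Chebyshev.theta (n / (m + u)) - Chebyshev.theta (n / (m + v))) =
      ∑ p ∈ Finset.range N, if ⌊(n:ℝ) / p⌋₊ < M then
        (if p.Prime ∧ u ≤ Int.fract ((n : ℝ) / (p : ℝ)) ∧ Int.fract ((n : ℝ) / (p : ℝ)) < v
          then Real.log p else 0) else 0 := by
    have : ∀ m ∈ Finset.range M,
      (Chebyshev.theta (n / (m + u)) - Chebyshev.theta (n / (m + v))) =
      ∑ p ∈ Finset.range N, if ⌊(n:ℝ) / p⌋₊ = m then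
        (if p.Prime ∧ u ≤ Int.fract ((n : ℝ) / (p : ℝ)) ∧ Int.fract ((n : ℝ) / (p : ℝ)) < v
          then Real.log p else 0) else 0 := by
      intro m _
      rw [n_theta_sub (by gcongr) N (hle _ (by linarith [m.cast_nonneg (α := ℝ)])) (by positivity)]
      refine Finset.sum_congr rfl fun p _ => ?_
      by_cases hp : p.Prime
      · simp only [hp, true_and, n_fract hu huv hv hp m, ← ite_and]
      · simp [hp]
    rw [Finset.sum_congr rfl this, Finset.sum_comm]
    refine Finset.sum_congr rfl fun p _ => ?_
    rw [Finset.sum_ite_eq]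
    simp
  have hM0 : (0:ℝ) < M := by exact_mod_cast hM
  have hM1 : (1:ℝ) ≤ M := by exact_mod_cast hM
  have hR : Chebyshev.theta (n / M) =
      ∑ p ∈ Finset.range N, if p.Prime ∧ (0:ℝ) < p ∧ (p:ℝ) ≤ n / M then Real.log p else 0 := by
    rw [← n_theta_sub (by positivity) N (hle _ (by linarith)) le_rfl, Chebyshev.theta_zero,
      sub_zero]
  rw [hS, hT, hR, ← Finset.sum_sub_distrib]
  have hlog : ∀ p : ℕ, 0 ≤ Real.log p := fun p => Real.log_natCast_nonneg p
  constructor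
  · refine Finset.sum_nonneg fun p _ => ?_
    have := hlog p
    split_ifs <;> simp [this]
  · refine Finset.sum_le_sum fun p _ => ?_
    have := hlog p
    by_cases hp : p.Prime
    · have hp0 : (0:ℝ) < p := by exact_mod_cast hp.pos
      by_cases hfl : ⌊(n:ℝ) / p⌋₊ < M
      · simp only [hfl, if_true, sub_self]
        split_ifs <;> simp [this]
      · have h1 : (M:ℝ) ≤ (n:ℝ) / p := (Nat.le_floor_iff (by positivity)).1 (not_lt.1 hfl)
        have h2 : (p:ℝ) ≤ n / M := by
          rw [le_div_iff₀ hM0, mul_comm, ← le_div_iff₀ hp0]; exact h1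
        simp only [hfl, if_false, sub_zero, hp, hp0, h2, true_and, and_self, if_true]
        split_ifs <;> simp [this]
    · simp [hp]

lemma n_theta_lim {a : ℝ} (ha : 0 < a) :
    Tendsto (fun n : ℕ => Chebyshev.theta (n / a) / n) atTop (𝓝 (1 / a)) := by
  have h1 : Tendsto (fun n : ℕ => (n:ℝ) / a) atTop atTop :=
    tendsto_natCast_atTop_atTop.atTop_div_const ha
  have h2 := (n_PNT.comp h1).mul_const (1 / a)
  rw [one_mul] at h2
  refine h2.congr' ?_
  filter_upwards [eventually_gt_atTop 0] with n hn
  have : (n:ℝ) ≠ 0 := by exact_mod_cast hn.ne'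
  simp only [Function.comp]
  field_simp

theorem n_main (u v : ℝ) (hu : 0 < u) (huv : u < v) (hv : v < 1) :
    Tendsto (fun n : ℕ => (1 / (n:ℝ)) * nS u v n) atTop (𝓝 (nDi v - nDi u)) := by
  rw [Metric.tendsto_atTop]
  intro ε hε
  obtain ⟨M, hM⟩ := exists_nat_gt (4 * (1 + Real.log 4) / ε)
  have hl4 : 0 < Real.log 4 := Real.log_pos (by norm_num)
  have hMp : (0:ℝ) < M := lt_trans (by positivity) hM
  have hM1 : 1 ≤ M := by exact_mod_cast hMp
  have hMe : (1 + Real.log 4) / M < ε / 4 := by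
    rw [div_lt_iff₀ hε] at hM
    rw [div_lt_iff₀ hMp]
    linarith
  have hlim : Tendsto (fun n : ℕ => ∑ m ∈ Finset.range M,
      (Chebyshev.theta (n / (m + u)) / n - Chebyshev.theta (n / (m + v)) / n)) atTop
      (𝓝 (∑ m ∈ Finset.range M, (1 / ((m:ℝ) + u) - 1 / (m + v)))) := by
    refine tendsto_finsetSum _ fun m _ => ?_
    have hv0 := hu.trans huv
    exact (n_theta_lim (by positivity)).sub (n_theta_lim (by positivity))
  obtain ⟨N, hN⟩ := Metric.tendsto_atTop.1 hlim (ε / 4) (by positivity)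
  refine ⟨max N 1, fun n hn => ?_⟩
  have hn0 : (0:ℝ) < n := by exact_mod_cast (le_max_right _ _).trans hn
  have h1 := hN n ((le_max_left _ _).trans hn)
  obtain ⟨h2, h3⟩ := n_decomp hu huv hv n M hM1
  obtain ⟨h4, h5⟩ := nDi_series hu huv hv M
  have h6 : Chebyshev.theta (n / M) ≤ Real.log 4 * (n / M) :=
    Chebyshev.theta_le_log4_mul_x (by positivity)
  have h7 : 1 / ((M:ℝ) + u) ≤ 1 / M := by gcongr; linarith
  set T := ∑ m ∈ Finset.range M,
      (Chebyshev.theta (n / (m + u)) - Chebyshev.theta (n / (m + v))) with hT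
  have e : ∑ m ∈ Finset.range M,
      (Chebyshev.theta (n / (m + u)) / n - Chebyshev.theta (n / (m + v)) / n) = T / n := by
    rw [hT, Finset.sum_div]
    simp only [sub_div]
  rw [e, Real.dist_eq, abs_lt] at h1
  have h8 : 0 ≤ 1 / (n:ℝ) * nS u v n - T / n := by
    have : 1 / (n:ℝ) * nS u v n - T / n = (nS u v n - T) / n := by ring
    rw [this]; positivity
  have h9 : 1 / (n:ℝ) * nS u v n - T / n ≤ Real.log 4 / M := by
    have : 1 / (n:ℝ) * nS u v n - T / n = (nS u v n - T) / n := by ring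
    rw [this, div_le_iff₀ hn0]
    calc _ ≤ _ := h3.trans h6
      _ = _ := by ring
  have h10 : (1 + Real.log 4) / M = 1 / M + Real.log 4 / M := by ring
  have h11 : 0 < 1 / (M:ℝ) := by positivity
  have h12 : 0 < Real.log 4 / (M:ℝ) := by positivity
  rw [Real.dist_eq, abs_lt]
  constructor <;> linarith [h1.1, h1.2]

theorem nesterenko_prime_sum (u v : ℝ) (hu : 0 < u) (huv : u < v) (hv : v < 1) :
    Filter.Tendsto
      (fun n : ℕ => (1 / (n : ℝ)) *
        ∑' p : ℕ,
          if p.Prime ∧ u ≤ Int.fract ((n : ℝ) / (p : ℝ)) ∧ Int.fract ((n : ℝ) / (p : ℝ)) < v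
          then Real.log p else 0)
      Filter.atTop
      (nhds ((deriv Real.Gamma v / Real.Gamma v) - (deriv Real.Gamma u / Real.Gamma u))) :=
  n_main u v hu huv hv
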